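/- Let L ⊂ K be d-dimensional simplicial complexes, γ = ∂σ for a d-simplex σ ∉ L, with γ null-homologous in K but not in L, and let n = min{n_{d-1}, n_d}. Then C_γ(L, K) = O( n · n₀ · T_max(K)² ), where T_max(K) is the maximum cardinality of the torsion subgroup of any relative homology group H_{d-1}(L', L₀'; ℤ) of K. -/

import Mathlib

/-!
The bound holds with `C = 1`. It suffices to exhibit one unit `γ`-potential of small energy, and
Cramer's rule provides it.

Choose columns of `∂[L]` forming a basis of its column space. As `γ = ∂σ` is not null-homologous in
`L`, adding the column of `σ` keeps the family independent, so some choice of rows (all of them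
faces of `L`) gives a square matrix `B`, a submatrix of the integral boundary matrix, with
`det B ≠ 0`. The row of `B⁻¹` dual to `γ`, extended by zero, is a unit `γ`-potential `p`. Its
entries are `± M / det B`, where the minor `M` omits the column of `σ` and hence only involves
simplices of `L ⊆ K`, and `|det B| ≥ 1` because `det B` is a nonzero integer.

A nonzero minor of the boundary matrix of `K` is bounded by a torsion cardinality
(`natAbs_minor_le_relTorsionCard`): the corresponding square submatrix is the boundary map of a
pair `(L', L₀')` having no other relative simplices in the two degrees, and its cokernel, of
cardinality the absolute value of the determinant, embeds in the torsion of `H_d(L', L₀')`.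
Thus `|p τ| ≤ T`. The support of `p` has at most `rank ∂[L] + 1` elements, which is at most `n_d`
(number of rows) and at most `n_{d+1}` (because `γ` is null-homologous in `K`, the chosen columns
and `γ` are independent vectors in the column space of `∂[K]`). This gives
`‖p‖² ≤ n T²` (`exists_bounded_potential`).

Finally `‖δ[K] p‖² ≤ n₀ ‖p‖²` (`sum_coboundary_sq_le`). On functions on all finite sets of vertices,
the sum over the vertices `v` of `K` of the operators exterior product with `v` plus contraction
by `v` squares to `n₀`, since these operators are self-adjoint, square to one and pairwise
anticommute; the coboundary of a `d`-chain is one homogeneous component of its image.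
-/

open Matrix

/-- An abstract simplicial complex on vertex set `V`: a finite, downward-closed
family of nonempty finite subsets of `V`. -/
structure SComplex (V : Type) where
  faces : Finset (Finset V)
  down_closed : ∀ s ∈ faces, ∀ t ⊆ s, t.Nonempty → t ∈ faces

/-- The index type of `d`-dimensional simplices (i.e. `(d+1)`-element subsets) on `V`. -/
abbrev SimpIdx (V : Type) (d : ℕ) := {s : Finset V // s.card = d + 1}

variable {V : Type} [Fintype V] [LinearOrder V]

/-- The signed incidence coefficient of the boundary operator: for `τ ⊆ σ` of
codimension one it is `(-1)ⁱ` where `i` is the position of the removed vertex. -/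
def bsign (τ σ : Finset V) : ℤ :=
  if τ ⊆ σ ∧ τ.card + 1 = σ.card then
    (-1 : ℤ) ^ (σ.filter (fun w => ∃ v ∈ σ \ τ, w < v)).card
  else 0

/-- The global integral boundary matrix `∂_{d+1}` from `(d+1)`-dimensional to
`d`-dimensional simplices on the vertex set `V`. -/
def gbdryZ (V : Type) [Fintype V] [LinearOrder V] (d : ℕ) :
    Matrix (SimpIdx V d) (SimpIdx V (d + 1)) ℤ :=
  fun τ σ => bsign (τ : Finset V) (σ : Finset V)

/-- The global real boundary matrix. -/
noncomputable def gbdry (V : Type) [Fintype V] [LinearOrder V] (d : ℕ) :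
    Matrix (SimpIdx V d) (SimpIdx V (d + 1)) ℝ :=
  (gbdryZ V d).map (fun z => (z : ℝ))

/-- Diagonal 0/1 matrix indicating membership of simplices in the complex `K`. -/
noncomputable def SComplex.ind (K : SComplex V) (d : ℕ) :
    Matrix (SimpIdx V d) (SimpIdx V d) ℝ :=
  Matrix.diagonal fun σ => if (σ : Finset V) ∈ K.faces then (1 : ℝ) else 0

/-- The boundary matrix `∂_{d+1}[K]` of the complex `K` (rows and columns outside
`K` are zero). -/
noncomputable def SComplex.bdry (K : SComplex V) (d : ℕ) :
    Matrix (SimpIdx V d) (SimpIdx V (d + 1)) ℝ :=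
  K.ind d * gbdry V d * K.ind (d + 1)

/-- A chain is supported on the complex `K`. -/
def SComplex.supportedOn (K : SComplex V) {d : ℕ} (f : SimpIdx V d → ℝ) : Prop :=
  ∀ σ : SimpIdx V d, f σ ≠ 0 → (σ : Finset V) ∈ K.faces

/-- A `d`-dimensional chain is a cycle (its boundary vanishes; every `0`-chain is a cycle). -/
def IsCycle (V : Type) [Fintype V] [LinearOrder V] : (d : ℕ) → (SimpIdx V d → ℝ) → Prop
  | 0, _ => True
  | (d + 1), γ => gbdry V d *ᵥ γ = 0

/-- A `d`-dimensional cycle `γ` is null-homologous in `K` iff it is the boundary of a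
`(d+1)`-chain of `K` (a unit `γ`-flow). -/
def SComplex.NullHomologous (K : SComplex V) (d : ℕ) (γ : SimpIdx V d → ℝ) : Prop :=
  ∃ f : SimpIdx V (d + 1) → ℝ, K.supportedOn f ∧ gbdry V d *ᵥ f = γ

/-- The weighted effective resistance of `γ` in `K`: the infimum of flow energies
`∑ f(σ)²/w(σ)` over unit `γ`-flows `f` in `K`. -/
noncomputable def SComplex.effResW (K : SComplex V) (d : ℕ)
    (w : SimpIdx V (d + 1) → ℝ) (γ : SimpIdx V d → ℝ) : ℝ :=
  sInf {E : ℝ | ∃ f : SimpIdx V (d + 1) → ℝ, K.supportedOn f ∧ gbdry V d *ᵥ f = γ ∧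
    E = ∑ σ : SimpIdx V (d + 1), f σ ^ 2 / w σ}

/-- Unweighted effective resistance. -/
noncomputable def SComplex.effRes (K : SComplex V) (d : ℕ) (γ : SimpIdx V d → ℝ) : ℝ :=
  K.effResW d (fun _ => 1) γ

/-- The weighted up-Laplacian `L^{up,W} = ∂ W ∂ᵀ` of `K` acting on `d`-chains. -/
noncomputable def SComplex.upLapW (K : SComplex V) (d : ℕ) (w : SimpIdx V (d + 1) → ℝ) :
    Matrix (SimpIdx V d) (SimpIdx V d) ℝ :=
  K.bdry d * Matrix.diagonal w * (K.bdry d)ᵀ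

/-- The (unweighted) up-Laplacian `L^{up} = ∂ ∂ᵀ` of `K` acting on `d`-chains. -/
noncomputable def SComplex.upLap (K : SComplex V) (d : ℕ) :
    Matrix (SimpIdx V d) (SimpIdx V d) ℝ :=
  K.bdry d * (K.bdry d)ᵀ

/-- The down-Laplacian `L^{down} = ∂ᵀ ∂` of `K` acting on `d`-chains (zero on `0`-chains). -/
noncomputable def SComplex.downLap (K : SComplex V) :
    (d : ℕ) → Matrix (SimpIdx V d) (SimpIdx V d) ℝ
  | 0 => 0
  | (d + 1) => (K.bdry d)ᵀ * K.bdry d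

/-- The combinatorial Laplacian `L = L^{up} + L^{down}`. -/
noncomputable def SComplex.combLap (K : SComplex V) (d : ℕ) :
    Matrix (SimpIdx V d) (SimpIdx V d) ℝ :=
  K.upLap d + K.downLap d

/-- `X` is the Moore–Penrose pseudoinverse of `A` (the four Penrose conditions). -/
def IsMoorePenrose {m n : Type} [Fintype m] [Fintype n]
    (A : Matrix m n ℝ) (X : Matrix n m ℝ) : Prop :=
  A * X * A = A ∧ X * A * X = X ∧ (A * X)ᵀ = A * X ∧ (X * A)ᵀ = X * A

/-- `μ` is an eigenvalue of the real matrix `M`. -/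
def IsEigen {n : Type} [Fintype n] (M : Matrix n n ℝ) (μ : ℝ) : Prop :=
  ∃ x : n → ℝ, x ≠ 0 ∧ M *ᵥ x = μ • x

/-- The spectral gap of `M`: the infimum of its nonzero (real) eigenvalues. -/
noncomputable def specGap {n : Type} [Fintype n] (M : Matrix n n ℝ) : ℝ :=
  sInf {μ : ℝ | μ ≠ 0 ∧ IsEigen M μ}

/-- The number of `d`-dimensional simplices of `K`. -/
def nface (K : SComplex V) (d : ℕ) : ℕ :=
  (K.faces.filter fun s => s.card = d + 1).card

/-- The weighted effective capacitance of `γ` for `L ⊆ K`: the infimum of potential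
energies `‖δ[K] p‖²_W` over unit `γ`-potentials `p` of `L`. -/
noncomputable def SComplex.effCapW (K L : SComplex V) (d : ℕ)
    (w : SimpIdx V (d + 1) → ℝ) (γ : SimpIdx V d → ℝ) : ℝ :=
  sInf {E : ℝ | ∃ p : SimpIdx V d → ℝ, L.supportedOn p ∧ (L.bdry d)ᵀ *ᵥ p = 0 ∧
    p ⬝ᵥ γ = 1 ∧ E = ∑ σ : SimpIdx V (d + 1), ((K.bdry d)ᵀ *ᵥ p) σ ^ 2 * w σ}

/-- Unweighted effective capacitance. -/
noncomputable def SComplex.effCap (K L : SComplex V) (d : ℕ) (γ : SimpIdx V d → ℝ) : ℝ :=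
  K.effCapW L d (fun _ => 1) γ

/-- The relative integral boundary matrix `∂[L, L₀]`: entries are kept only for
simplices of `L` not in `L₀`. -/
def relBdryZ (L L₀ : SComplex V) (d : ℕ) :
    Matrix (SimpIdx V d) (SimpIdx V (d + 1)) ℤ :=
  fun τ σ => if (τ : Finset V) ∈ L.faces ∧ (τ : Finset V) ∉ L₀.faces ∧
      (σ : Finset V) ∈ L.faces ∧ (σ : Finset V) ∉ L₀.faces then
    bsign (τ : Finset V) (σ : Finset V) else 0

/-- Kernel of the relative boundary map out of relative `d`-chains. -/
noncomputable def relKer (L L₀ : SComplex V) : (d : ℕ) → Submodule ℤ (SimpIdx V d → ℤ)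
  | 0 => ⊤
  | (d + 1) => LinearMap.ker (Matrix.toLin' (relBdryZ L L₀ d))

/-- The cardinality of the torsion subgroup of the relative homology group
`H_d(L, L₀; ℤ)`. -/
noncomputable def relTorsionCard (L L₀ : SComplex V) (d : ℕ) : ℕ :=
  Nat.card (Submodule.torsion ℤ
    (↥(relKer L L₀ d) ⧸ Submodule.comap (relKer L L₀ d).subtype
      (LinearMap.range (Matrix.toLin' (relBdryZ L L₀ d)))))

set_option linter.unusedSectionVars false

/-! ### Maximal minors and cokernels of integer matrices -/

/-- A matrix with independent columns has a nonzero maximal minor. -/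
lemma exists_minor {R : Type} [Fintype R] {n : ℕ} (M : Matrix R (Fin n) ℝ)
    (h : LinearIndependent ℝ M.col) :
    ∃ r : Fin n → R, Function.Injective r ∧ (M.submatrix r id).det ≠ 0 := by
  classical
  obtain ⟨κ, a, ha, hspan, hli⟩ := exists_linearIndependent' ℝ M.row
  have : Fintype κ := Fintype.ofInjective a ha
  have h1 : M.rank = n := by
    have := LinearIndependent.rank_matrix (M := Mᵀ) h
    simpa [Matrix.rank_transpose] using this
  have hcard : Fintype.card κ = n := by
    rw [← finrank_span_eq_card hli, hspan, ← Matrix.rank_eq_finrank_span_row, h1]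
  let e : Fin n ≃ κ := (Fintype.equivFinOfCardEq hcard).symm
  refine ⟨a ∘ e, ha.comp e.injective, ?_⟩
  have h2 : LinearIndependent ℝ (M.submatrix (a ∘ e) id).row := hli.comp e e.injective
  rw [Matrix.linearIndependent_rows_iff_isUnit, Matrix.isUnit_iff_isUnit_det] at h2
  exact h2.ne_zero

lemma card_quotient_range {ι : Type} [Fintype ι] [DecidableEq ι] (M : Matrix ι ι ℤ)
    (h : M.det ≠ 0) :
    Nat.card ((ι → ℤ) ⧸ LinearMap.range (Matrix.toLin' M)) = M.det.natAbs := by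
  have hinj : Function.Injective (Matrix.toLin' M) := by
    rw [← LinearMap.ker_eq_bot]
    exact Matrix.ker_toLin'_eq_bot_iff.2 fun v hv => Matrix.eq_zero_of_mulVec_eq_zero h hv
  rw [← Submodule.natAbs_det_equiv _ (LinearEquiv.ofInjective _ hinj)]
  congr 1
  rw [← LinearMap.det_toLin']
  congr 1

/-! ### Minors of the boundary matrix and relative torsion -/

/-- The subcomplex of `K` made of its `d`-skeleton and of the `(d + 1)`-simplices `c j`. -/
noncomputable def minorTop (K : SComplex V) {ι : Type} (d : ℕ) (c : ι → SimpIdx V (d + 1)) : SComplex V := by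
  classical
  exact
  { faces := {s ∈ K.faces | s.card ≤ d + 1 ∨ ∃ j, (c j : Finset V) = s}
    down_closed := by
      intro s hs t hts ht
      rw [Finset.mem_filter] at hs ⊢
      refine ⟨K.down_closed s hs.1 t hts ht, ?_⟩
      rcases eq_or_ne t s with rfl | hne
      · exact hs.2
      · left
        have h1 := Finset.card_lt_card (Finset.ssubset_iff_subset_ne.2 ⟨hts, hne⟩)
        rcases hs.2 with h | ⟨j, rfl⟩
        · omega
        · have := (c j).2
          omega }

/-- The subcomplex of the `d`-skeleton of `K` obtained by removing the `d`-simplices `r i`. The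
relative simplices of `(minorTop K d c, minorBot K d r)` are exactly the `r i` in dimension `d` and
the `c j` in dimension `d + 1`, provided these lie in `K`. -/
noncomputable def minorBot (K : SComplex V) {ι : Type} (d : ℕ) (r : ι → SimpIdx V d) : SComplex V := by
  classical
  exact
  { faces := {s ∈ K.faces | s.card ≤ d + 1 ∧ ∀ i, (r i : Finset V) ≠ s}
    down_closed := by
      intro s hs t hts ht
      rw [Finset.mem_filter] at hs ⊢
      refine ⟨K.down_closed s hs.1 t hts ht, (Finset.card_le_card hts).trans hs.2.1, ?_⟩
      rintro i rfl
      refine hs.2.2 i (Finset.eq_of_subset_of_card_le hts ?_)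
      rw [(r i).2]
      exact hs.2.1 }

lemma mem_minorTop {K : SComplex V} {ι : Type} {d : ℕ} {c : ι → SimpIdx V (d + 1)}
    {s : Finset V} : s ∈ (minorTop K d c).faces ↔
      s ∈ K.faces ∧ (s.card ≤ d + 1 ∨ ∃ j, (c j : Finset V) = s) := by
  classical
  simp [minorTop]

lemma mem_minorBot {K : SComplex V} {ι : Type} {d : ℕ} {r : ι → SimpIdx V d}
    {s : Finset V} : s ∈ (minorBot K d r).faces ↔
      s ∈ K.faces ∧ s.card ≤ d + 1 ∧ ∀ i, (r i : Finset V) ≠ s := by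
  classical
  simp [minorBot]

lemma relBdryZ_minor_apply {K : SComplex V} {ι : Type} {d : ℕ} {r : ι → SimpIdx V d}
    {c : ι → SimpIdx V (d + 1)} (hrK : ∀ i, (r i : Finset V) ∈ K.faces)
    (hcK : ∀ i, (c i : Finset V) ∈ K.faces) (i j : ι) :
    relBdryZ (minorTop K d c) (minorBot K d r) d (r i) (c j) = gbdryZ V d (r i) (c j) := by
  have h1 := (r i).2
  have h2 := (c j).2
  refine if_pos ⟨mem_minorTop.2 ⟨hrK i, .inl h1.le⟩, fun h => (mem_minorBot.1 h).2.2 i rfl,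
    mem_minorTop.2 ⟨hcK j, .inr ⟨j, rfl⟩⟩, fun h => ?_⟩
  have := (mem_minorBot.1 h).2.1
  omega

lemma relBdryZ_minor_eq_zero_left {K : SComplex V} {ι : Type} {d : ℕ} {r : ι → SimpIdx V d}
    {c : ι → SimpIdx V (d + 1)} {τ : SimpIdx V d} (hτ : ¬ ∃ i, r i = τ) (s : SimpIdx V (d + 1)) :
    relBdryZ (minorTop K d c) (minorBot K d r) d τ s = 0 := by
  refine if_neg fun h => h.2.1 (mem_minorBot.2 ⟨(mem_minorTop.1 h.1).1, τ.2.le, fun i hi => ?_⟩)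
  exact hτ ⟨i, Subtype.ext hi⟩

lemma relBdryZ_minor_eq_zero_right {K : SComplex V} {ι : Type} {d : ℕ} {r : ι → SimpIdx V d}
    {c : ι → SimpIdx V (d + 1)} (τ : SimpIdx V d) {s : SimpIdx V (d + 1)} (hs : ¬ ∃ i, c i = s) :
    relBdryZ (minorTop K d c) (minorBot K d r) d τ s = 0 := by
  refine if_neg fun h => ?_
  rcases (mem_minorTop.1 h.2.2.1).2 with h' | ⟨j, hj⟩
  · have := s.2
    omega
  · exact hs ⟨j, Subtype.ext hj⟩

/-- There are no relative `(d - 1)`-simplices, so every relative `d`-chain is a cycle. -/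
lemma relKer_minor_eq_top {K : SComplex V} {ι : Type} {d : ℕ} {r : ι → SimpIdx V d}
    {c : ι → SimpIdx V (d + 1)} : relKer (minorTop K d c) (minorBot K d r) d = ⊤ := by
  cases d with
  | zero => rfl
  | succ d =>
    have h0 : relBdryZ (minorTop K (d + 1) c) (minorBot K (d + 1) r) d = 0 := by
      ext τ s
      refine if_neg fun h => h.2.1 (mem_minorBot.2 ⟨(mem_minorTop.1 h.1).1, ?_, fun i hi => ?_⟩)
      · have := τ.2
        omega
      · have h1 := τ.2
        have h2 := (r i).2
        rw [hi] at h2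
        omega
    simp [relKer, h0]

lemma relBdryZ_minor_mulVec {K : SComplex V} {ι : Type} [Fintype ι] {d : ℕ} {r : ι → SimpIdx V d}
    {c : ι → SimpIdx V (d + 1)} (hc : Function.Injective c)
    (hrK : ∀ i, (r i : Finset V) ∈ K.faces) (hcK : ∀ i, (c i : Finset V) ∈ K.faces)
    (y : SimpIdx V (d + 1) → ℤ) (i : ι) :
    (relBdryZ (minorTop K d c) (minorBot K d r) d *ᵥ y) (r i) =
      ((gbdryZ V d).submatrix r c *ᵥ (y ∘ c)) i := by
  classical
  simp only [Matrix.mulVec, dotProduct, Matrix.submatrix_apply, Function.comp]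
  symm
  refine Finset.sum_of_injOn c hc.injOn (by simp) ?_ ?_
  · intro s _ hs
    rw [relBdryZ_minor_eq_zero_right _ (by simpa using hs), zero_mul]
  · intro j _
    rw [relBdryZ_minor_apply hrK hcK]

/-- For the pair picking out the rows `r` and the columns `c`, the cokernel of the square submatrix
embeds in the torsion of the relative homology: it is annihilated by the determinant. The ambient
`relKer` lives in functions on all `d`-simplices of `V`, so there is also a free part, which is why
only an inequality is stated. -/
lemma natAbs_minor_le_relTorsionCard {K : SComplex V} {ι : Type} [Fintype ι] [DecidableEq ι]
    {d : ℕ} {r : ι → SimpIdx V d} {c : ι → SimpIdx V (d + 1)}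
    (hr : Function.Injective r) (hc : Function.Injective c)
    (hrK : ∀ i, (r i : Finset V) ∈ K.faces) (hcK : ∀ i, (c i : Finset V) ∈ K.faces)
    (hdet : ((gbdryZ V d).submatrix r c).det ≠ 0) :
    ((gbdryZ V d).submatrix r c).det.natAbs ≤
      relTorsionCard (minorTop K d c) (minorBot K d r) d := by
  classical
  set M := (gbdryZ V d).submatrix r c with hM
  set L' := minorTop K d c
  set L₀ := minorBot K d r
  unfold relTorsionCard
  set B := Submodule.comap (relKer L' L₀ d).subtype
      (LinearMap.range (Matrix.toLin' (relBdryZ L' L₀ d))) with hB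
  let ext : (ι → ℤ) →ₗ[ℤ] (relKer L' L₀ d) :=
    LinearMap.codRestrict _ (Function.ExtendByZero.linearMap ℤ r)
      (fun x => by rw [relKer_minor_eq_top]; trivial)
  have hext : ∀ x i, (ext x : SimpIdx V d → ℤ) (r i) = x i := fun x i =>
    hr.extend_apply x (0 : SimpIdx V d → ℤ) i
  have hext0 : ∀ x τ, (¬ ∃ i, r i = τ) → (ext x : SimpIdx V d → ℤ) τ = 0 := fun x τ h =>
    Function.extend_apply' x (0 : SimpIdx V d → ℤ) τ h
  let φ : (ι → ℤ) →ₗ[ℤ] (relKer L' L₀ d ⧸ B) := B.mkQ ∘ₗ ext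
  have hφ : ∀ x, φ x = 0 ↔ x ∈ LinearMap.range (Matrix.toLin' M) := by
    intro x
    change B.mkQ (ext x) = 0 ↔ _
    rw [Submodule.mkQ_apply, Submodule.Quotient.mk_eq_zero, hB, Submodule.mem_comap,
      LinearMap.mem_range, LinearMap.mem_range]
    constructor
    · rintro ⟨y, hy⟩
      refine ⟨y ∘ c, funext fun i => ?_⟩
      rw [Matrix.toLin'_apply] at hy ⊢
      rw [hM, ← relBdryZ_minor_mulVec hc hrK hcK, hy]
      exact hext x i
    · rintro ⟨z, rfl⟩
      refine ⟨Function.extend c z (0 : SimpIdx V (d + 1) → ℤ), funext fun τ => ?_⟩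
      rw [Matrix.toLin'_apply, Matrix.toLin'_apply]
      by_cases hτ : ∃ i, r i = τ
      · obtain ⟨i, rfl⟩ := hτ
        rw [relBdryZ_minor_mulVec hc hrK hcK, Function.extend_comp hc]
        exact (hext _ i).symm
      · refine Eq.trans ?_ (hext0 _ τ hτ).symm
        exact Finset.sum_eq_zero fun s _ =>
          mul_eq_zero_of_left (relBdryZ_minor_eq_zero_left hτ s) _
  -- `det M • x` lies in the range of `M`, by the adjugate formula.
  have htors : ∀ x, φ x ∈ Submodule.torsion ℤ (relKer L' L₀ d ⧸ B) := by
    intro x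
    rw [Submodule.mem_torsion_iff]
    refine ⟨⟨M.det, mem_nonZeroDivisors_of_ne_zero hdet⟩, ?_⟩
    change M.det • φ x = 0
    rw [← map_smul, hφ]
    refine ⟨M.adjugate *ᵥ x, ?_⟩
    rw [Matrix.toLin'_apply, Matrix.mulVec_mulVec, Matrix.mul_adjugate, Matrix.smul_mulVec,
      Matrix.one_mulVec]
  let ψ := (LinearMap.range (Matrix.toLin' M)).liftQ
    (LinearMap.codRestrict (Submodule.torsion ℤ (relKer L' L₀ d ⧸ B)) φ htors)
    (fun x hx => by
      rw [LinearMap.mem_ker]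
      exact Subtype.ext ((hφ x).2 hx))
  have hψ : Function.Injective ψ := by
    rw [← LinearMap.ker_eq_bot]
    refine Submodule.ker_liftQ_eq_bot _ _ _ fun x hx => (hφ x).1 ?_
    exact congrArg Subtype.val (LinearMap.mem_ker.1 hx)
  have hfin : Finite (Submodule.torsion ℤ (relKer L' L₀ d ⧸ B)) :=
    Module.finite_of_fg_torsion _ (Submodule.torsion_isTorsion)
  rw [← card_quotient_range M hdet]
  exact Nat.card_le_card_of_injective ψ hψ

lemma natAbs_minor_le {K : SComplex V} {d T m : ℕ}
    (hT : ∀ L' L₀' : SComplex V, L'.faces ⊆ K.faces → L₀'.faces ⊆ L'.faces →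
        relTorsionCard L' L₀' d ≤ T) {r : Fin m → SimpIdx V d} {c : Fin m → SimpIdx V (d + 1)}
    (hr : Function.Injective r) (hc : Function.Injective c)
    (hrK : ∀ i, (r i : Finset V) ∈ K.faces) (hcK : ∀ i, (c i : Finset V) ∈ K.faces) :
    ((gbdryZ V d).submatrix r c).det.natAbs ≤ T := by
  by_cases hdet : ((gbdryZ V d).submatrix r c).det = 0
  · rw [hdet]
    exact Nat.zero_le T
  · refine (natAbs_minor_le_relTorsionCard hr hc hrK hcK hdet).trans (hT _ _ ?_ ?_)
    · exact fun s hs => (mem_minorTop.1 hs).1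
    · intro s hs
      have h := mem_minorBot.1 hs
      exact mem_minorTop.2 ⟨h.1, .inl h.2.1⟩

/-! ### The coboundary norm bound -/

open scoped symmDiff

/-- The sign of inserting `v` into, or removing `v` from, the ordered set `S`. Only elements
different from `v` are counted, so `S` and `S ∆ {v}` give the same sign. -/
def fsign (v : V) (S : Finset V) : ℝ := (-1) ^ (S.filter (· < v)).card

lemma fsign_symmDiff (v w : V) (S : Finset V) :
    fsign v (S ∆ {w}) = if w < v then - fsign v S else fsign v S := by
  unfold fsign
  by_cases hw : w ∈ S
  · have h1 : S ∆ {w} = S.erase w := by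
      ext x; simp only [Finset.mem_symmDiff, Finset.mem_singleton, Finset.mem_erase]; grind
    rw [h1, Finset.filter_erase]
    split_ifs with h
    · have hm : w ∈ S.filter (· < v) := by simp [hw, h]
      rw [← Finset.card_erase_add_one hm, pow_succ]
      ring
    · rw [Finset.erase_eq_of_notMem (by simp [h])]
  · have h1 : S ∆ {w} = insert w S := by
      ext x; simp only [Finset.mem_symmDiff, Finset.mem_singleton, Finset.mem_insert]; grind
    rw [h1, Finset.filter_insert]
    split_ifs with h
    · rw [Finset.card_insert_of_notMem (by simp [hw]), pow_succ]
      ring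
    · rfl

lemma fsign_sq (v : V) (S : Finset V) : fsign v S * fsign v S = 1 := by
  unfold fsign
  rw [← mul_pow]
  norm_num

/-- The sum over `v ∈ A` of exterior product with `v` plus contraction by `v`: either way the value
at `S` is, up to sign, the value of `p` at the set obtained from `S` by toggling `v`. -/
def dirac (A : Finset V) (p : Finset V → ℝ) (S : Finset V) : ℝ :=
  ∑ v ∈ A, fsign v S * p (S ∆ {v})

lemma sum_flip (v : V) (f : Finset V → ℝ) : ∑ S, f (S ∆ {v}) = ∑ S, f S :=
  Fintype.sum_bijective (· ∆ {v}) (symmDiff_left_involutive {v}).bijective _ _ fun _ => rfl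

/-- Anticommutation: toggling both `v` and `w` in `S` permutes the summands and changes their
signs. -/
lemma sum_cross {v w : V} (h : v ≠ w) (p : Finset V → ℝ) :
    ∑ S, (fsign v S * p (S ∆ {v})) * (fsign w S * p (S ∆ {w})) = 0 := by
  set f : Finset V → ℝ := fun S => (fsign v S * p (S ∆ {v})) * (fsign w S * p (S ∆ {w}))
    with hf
  have h1 : ∀ S, f ((S ∆ {v}) ∆ {w}) = - f S := by
    intro S
    have e1 : ((S ∆ {v}) ∆ {w}) ∆ {v} = S ∆ {w} := by
      rw [symmDiff_right_comm, symmDiff_symmDiff_cancel_right]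
    simp only [hf, e1, symmDiff_symmDiff_cancel_right]
    simp only [fsign_symmDiff, lt_irrefl, if_false]
    rcases lt_or_gt_of_ne h with h | h
    · simp only [h, h.not_gt, if_true, if_false]
      ring
    · simp only [h, h.not_gt, if_true, if_false]
      ring
  have h2 : ∑ S, f ((S ∆ {v}) ∆ {w}) = ∑ S, f S := by
    rw [sum_flip v (fun S => f (S ∆ {w})), sum_flip w f]
  simp only [h1, Finset.sum_neg_distrib] at h2
  linarith

lemma sum_dirac_sq (A : Finset V) (p : Finset V → ℝ) :
    ∑ S, dirac A p S ^ 2 = A.card * ∑ S, p S ^ 2 := by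
  have h1 : ∀ S, dirac A p S ^ 2 = ∑ v ∈ A, ∑ w ∈ A,
      (fsign v S * p (S ∆ {v})) * (fsign w S * p (S ∆ {w})) := by
    intro S
    rw [sq, dirac, Finset.sum_mul_sum]
  simp only [h1]
  rw [Finset.sum_comm, ← nsmul_eq_mul]
  refine Finset.sum_eq_card_nsmul fun v hv => ?_
  rw [Finset.sum_comm, Finset.sum_eq_single_of_mem v hv fun w _ hw => sum_cross hw.symm p,
    ← sum_flip v (fun S => p S ^ 2)]
  refine Finset.sum_congr rfl fun S _ => ?_
  linear_combination p (S ∆ {v}) ^ 2 * fsign_sq v S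

lemma bsign_erase {S : Finset V} {v : V} (hv : v ∈ S) :
    (bsign (S.erase v) S : ℝ) = fsign v S := by
  have h1 : S \ S.erase v = {v} := by
    ext x; simp only [Finset.mem_sdiff, Finset.mem_erase, Finset.mem_singleton]; grind
  rw [bsign, if_pos ⟨Finset.erase_subset v S, Finset.card_erase_add_one hv⟩, h1, fsign]
  simp

lemma bsign_eq_zero {τ S : Finset V} (h : ∀ v ∈ S, S.erase v ≠ τ) : bsign τ S = 0 := by
  refine if_neg fun hh => ?_
  obtain ⟨v, hv⟩ := Finset.card_eq_one.1 (show (S \ τ).card = 1 by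
    rw [Finset.card_sdiff_of_subset hh.1]; omega)
  have hvS : v ∈ S := (Finset.mem_sdiff.1 (hv ▸ Finset.mem_singleton_self v : v ∈ S \ τ)).1
  refine h v hvS ?_
  rw [Finset.erase_eq, ← hv, Finset.sdiff_sdiff_eq_self hh.1]

/-- The vertices of `K`. -/
def vertexSet (K : SComplex V) : Finset V := Finset.univ.filter fun v => {v} ∈ K.faces

lemma card_vertexSet (K : SComplex V) : (vertexSet K).card = nface K 0 := by
  unfold nface vertexSet
  refine Finset.card_bij (fun v _ => {v}) (by simp) (by simp) ?_
  intro s hs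
  rw [Finset.mem_filter, zero_add] at hs
  obtain ⟨v, rfl⟩ := Finset.card_eq_one.1 hs.2
  exact ⟨v, by simpa using hs.1, rfl⟩

/-- The row mask in `K.bdry` is redundant since `K` is closed under taking faces. -/
lemma bdry_apply (K : SComplex V) (d : ℕ) (τ : SimpIdx V d) (s : SimpIdx V (d + 1)) :
    K.bdry d τ s = if (s : Finset V) ∈ K.faces then gbdry V d τ s else 0 := by
  have : K.bdry d τ s = (if (τ : Finset V) ∈ K.faces then (1 : ℝ) else 0) * gbdry V d τ s *
      (if (s : Finset V) ∈ K.faces then (1 : ℝ) else 0) := by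
    rw [SComplex.bdry, SComplex.ind, SComplex.ind, Matrix.mul_diagonal, Matrix.diagonal_mul]
  rw [this]
  split_ifs with h1 h2 h2
  · ring
  · ring
  · have : gbdry V d τ s = 0 := by
      change ((bsign (τ : Finset V) (s : Finset V) : ℤ) : ℝ) = 0
      rw [bsign, if_neg, Int.cast_zero]
      intro hh
      exact h1 (K.down_closed _ h2 _ hh.1 (Finset.card_pos.1 (by rw [τ.2]; omega)))
    rw [this]; ring
  · ring

lemma bdry_transpose_mulVec (K : SComplex V) (d : ℕ) (p : SimpIdx V d → ℝ)
    (s : SimpIdx V (d + 1)) :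
    ((K.bdry d)ᵀ *ᵥ p) s =
      if (s : Finset V) ∈ K.faces then ((gbdry V d)ᵀ *ᵥ p) s else 0 := by
  simp only [Matrix.mulVec, dotProduct, Matrix.transpose_apply, bdry_apply]
  split_ifs <;> simp

/-- A `d`-chain as a function on all finite sets, zero in the other dimensions. -/
def extendChain {d : ℕ} (p : SimpIdx V d → ℝ) (S : Finset V) : ℝ :=
  if h : S.card = d + 1 then p ⟨S, h⟩ else 0

lemma sum_extendChain_sq {d : ℕ} (p : SimpIdx V d → ℝ) :
    ∑ S, extendChain p S ^ 2 = ∑ τ, p τ ^ 2 := by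
  symm
  refine Finset.sum_of_injOn Subtype.val Subtype.val_injective.injOn (by simp) ?_ ?_
  · intro S _ hS
    rw [extendChain, dif_neg, zero_pow two_ne_zero]
    intro h
    exact hS ⟨⟨S, h⟩, by simp, rfl⟩
  · intro τ _
    rw [extendChain, dif_pos τ.2]

/-- On a `(d + 1)`-simplex only the exterior product part of `dirac` sees a `d`-chain: contraction
would evaluate it on sets with two elements too many. -/
lemma coboundary_eq_dirac (K : SComplex V) {d : ℕ} (p : SimpIdx V d → ℝ)
    (s : SimpIdx V (d + 1)) (hs : (s : Finset V) ∈ K.faces) :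
    ((gbdry V d)ᵀ *ᵥ p) s = dirac (vertexSet K) (extendChain p) s := by
  obtain ⟨S, hS⟩ := s
  have hsub : S ⊆ vertexSet K := fun v hv => by
    simpa [vertexSet] using K.down_closed S hs {v} (by simpa using hv) (by simp)
  have hflip : ∀ v ∈ S, S ∆ {v} = S.erase v := fun v hv => by
    ext x; simp only [Finset.mem_symmDiff, Finset.mem_singleton, Finset.mem_erase]; grind
  have hcard : ∀ v ∈ S, (S.erase v).card = d + 1 := fun v hv => by
    rw [Finset.card_erase_of_mem hv, hS]; omega
  have h1 : dirac (vertexSet K) (extendChain p) S =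
      ∑ v ∈ S, fsign v S * extendChain p (S.erase v) := by
    unfold dirac
    rw [← Finset.sum_subset hsub]
    · exact Finset.sum_congr rfl fun v hv => by rw [hflip v hv]
    · intro v _ hv
      have h2 : S ∆ {v} = insert v S := by
        ext x; simp only [Finset.mem_symmDiff, Finset.mem_singleton, Finset.mem_insert]; grind
      rw [h2, extendChain, dif_neg, mul_zero]
      rw [Finset.card_insert_of_notMem hv, hS]; omega
  change _ = dirac (vertexSet K) (extendChain p) S
  rw [h1, ← Finset.sum_attach]
  symm
  refine Finset.sum_of_injOn (fun v => ⟨S.erase v.1, hcard v.1 v.2⟩) ?_ (by simp) ?_ ?_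
  · intro v _ w _ h
    exact Subtype.ext (Finset.erase_injOn S v.2 w.2 (Subtype.ext_iff.1 h))
  · intro τ _ hτ
    change ((bsign (τ : Finset V) S : ℤ) : ℝ) * _ = 0
    rw [bsign_eq_zero, Int.cast_zero, zero_mul]
    intro v hv h
    exact hτ ⟨⟨v, hv⟩, by simp, Subtype.ext h⟩
  · rintro ⟨v, hv⟩ _
    change _ = ((bsign (S.erase v) S : ℤ) : ℝ) * _
    rw [bsign_erase hv, extendChain, dif_pos (hcard v hv)]

/-- The largest eigenvalue of the up-Laplacian is at most the number of vertices. -/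
lemma sum_coboundary_sq_le (K : SComplex V) {d : ℕ} (p : SimpIdx V d → ℝ) :
    ∑ s, ((K.bdry d)ᵀ *ᵥ p) s ^ 2 ≤ nface K 0 * ∑ τ, p τ ^ 2 := by
  rw [← card_vertexSet, ← sum_extendChain_sq p, ← sum_dirac_sq]
  have h1 : ∀ s : SimpIdx V (d + 1), ((K.bdry d)ᵀ *ᵥ p) s ^ 2 ≤
      dirac (vertexSet K) (extendChain p) s ^ 2 := by
    intro s
    rw [bdry_transpose_mulVec]
    split_ifs with h
    · rw [coboundary_eq_dirac K p s h]
    · rw [zero_pow two_ne_zero]; positivity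
  refine (Finset.sum_le_sum fun s _ => h1 s).trans ?_
  refine (Finset.sum_map Finset.univ (Function.Embedding.subtype _)
    (fun S => dirac (vertexSet K) (extendChain p) S ^ 2)).symm.le.trans ?_
  exact Finset.sum_le_sum_of_subset_of_nonneg (Finset.subset_univ _) fun _ _ _ => sq_nonneg _

/-! ### The Cramer potential -/

lemma nullHomologous_iff_mem_span (L : SComplex V) (d : ℕ) (γ : SimpIdx V d → ℝ) :
    L.NullHomologous d γ ↔ γ ∈ Submodule.span ℝ (Set.range
      fun s : {s : SimpIdx V (d + 1) // (s : Finset V) ∈ L.faces} => (gbdry V d).col s.1) := by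
  classical
  rw [Submodule.mem_span_range_iff_exists_fun]
  have key : ∀ f : SimpIdx V (d + 1) → ℝ, L.supportedOn f →
      ∑ s : {s : SimpIdx V (d + 1) // (s : Finset V) ∈ L.faces}, f s.1 • (gbdry V d).col s.1 =
        gbdry V d *ᵥ f := by
    intro f hf
    ext τ
    rw [Finset.sum_apply]
    refine Finset.sum_of_injOn Subtype.val Subtype.val_injective.injOn (by simp) ?_ ?_
    · intro s _ hs
      have : f s = 0 := by
        by_contra h
        exact hs ⟨⟨s, hf s h⟩, by simp, rfl⟩
      rw [this, mul_zero]
    · intro s _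
      rw [Pi.smul_apply, smul_eq_mul, mul_comm]
      rfl
  constructor
  · rintro ⟨f, hf, rfl⟩
    exact ⟨fun s => f s.1, key f hf⟩
  · rintro ⟨g, rfl⟩
    refine ⟨Function.extend Subtype.val g 0, fun s hs => ?_, ?_⟩
    · by_contra h
      refine hs (Function.extend_apply' g (0 : SimpIdx V (d + 1) → ℝ) s ?_)
      rintro ⟨a, rfl⟩
      exact h a.2
    · rw [← key]
      · exact Finset.sum_congr rfl fun s _ => by rw [Subtype.val_injective.extend_apply]
      · intro s hs
        by_contra h
        refine hs (Function.extend_apply' g (0 : SimpIdx V (d + 1) → ℝ) s ?_)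
        rintro ⟨a, rfl⟩
        exact h a.2

lemma sum_extend {ι R : Type} [Fintype ι] [Fintype R] {r : ι → R}
    (hr : Function.Injective r) (q : ι → ℝ) (F : ℝ → R → ℝ) (hF : ∀ i, F 0 i = 0) :
    ∑ τ, F (Function.extend r q 0 τ) τ = ∑ i, F (q i) (r i) := by
  symm
  refine Finset.sum_of_injOn r hr.injOn (by simp) ?_ ?_
  · intro τ _ hτ
    rw [Function.extend_apply' q (0 : R → ℝ) τ (by simpa using hτ), Pi.zero_apply, hF]
  · intro i _
    rw [hr.extend_apply]

lemma card_le_nface {K : SComplex V} {d m : ℕ} {r : Fin m → SimpIdx V d}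
    (hr : Function.Injective r) (hrK : ∀ i, (r i : Finset V) ∈ K.faces) : m ≤ nface K d := by
  have := Finset.card_le_card_of_injOn (s := Finset.univ)
    (t := K.faces.filter fun s => s.card = d + 1) (fun i => (r i : Finset V))
    (fun i _ => by simpa using ⟨hrK i, (r i).2⟩)
    (Subtype.val_injective.comp hr).injOn
  simpa [nface] using this

lemma card_subtype_faces (K : SComplex V) (d : ℕ)
    [Fintype {s : SimpIdx V d // (s : Finset V) ∈ K.faces}] :
    Fintype.card {s : SimpIdx V d // (s : Finset V) ∈ K.faces} ≤ nface K d := by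
  let e := Fintype.equivFin {s : SimpIdx V d // (s : Finset V) ∈ K.faces}
  exact card_le_nface (r := fun i => (e.symm i).1)
    (Subtype.val_injective.comp e.symm.injective) fun i => (e.symm i).2

/-- The potential given by Cramer's rule, with its norm bound. -/
lemma exists_bounded_potential {K L : SComplex V} {d : ℕ} (hLK : L.faces ⊆ K.faces)
    {σ : SimpIdx V (d + 1)}
    (hσ : ∀ t ⊆ (σ : Finset V), t.Nonempty → t ≠ (σ : Finset V) → t ∈ L.faces)
    (hK : K.NullHomologous d ((gbdry V d).col σ))
    (hL : ¬ L.NullHomologous d ((gbdry V d).col σ)) {T : ℕ}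
    (hT : ∀ L' L₀' : SComplex V, L'.faces ⊆ K.faces → L₀'.faces ⊆ L'.faces →
        relTorsionCard L' L₀' d ≤ T) :
    ∃ p : SimpIdx V d → ℝ, L.supportedOn p ∧ (L.bdry d)ᵀ *ᵥ p = 0 ∧
      p ⬝ᵥ (gbdry V d).col σ = 1 ∧
      ∑ τ, p τ ^ 2 ≤ ((min (nface K d) (nface K (d + 1)) : ℕ) : ℝ) * (T : ℝ) ^ 2 := by
  classical
  rw [nullHomologous_iff_mem_span] at hK hL
  set u := fun s : {s : SimpIdx V (d + 1) // (s : Finset V) ∈ L.faces} => (gbdry V d).col s.1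
    with hu
  obtain ⟨κ, a, ha, hspan, hli⟩ := exists_linearIndependent' ℝ u
  have : Fintype κ := Fintype.ofInjective a ha
  obtain ⟨m, ⟨e⟩⟩ := Finite.exists_equiv_fin κ
  set c : Fin m → SimpIdx V (d + 1) := fun i => (a (e.symm i)).1 with hc
  have hcinj : Function.Injective c :=
    Subtype.val_injective.comp (ha.comp e.symm.injective)
  have hcL : ∀ i, (c i : Finset V) ∈ L.faces := fun i => (a (e.symm i)).2
  have hspan' : Submodule.span ℝ (Set.range fun i => (gbdry V d).col (c i)) =
      Submodule.span ℝ (Set.range u) := by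
    rw [← hspan, ← e.symm.surjective.range_comp (u ∘ a)]
    rfl
  -- Column `0` is that of `σ`, so deleting it leaves a minor with columns in `L`.
  set c' : Fin (m + 1) → SimpIdx V (d + 1) := Fin.cons σ c with hc'
  have hcols : ((gbdry V d).submatrix id c').col =
      (Fin.cons ((gbdry V d).col σ) fun i => (gbdry V d).col (c i)) := by
    funext j
    refine Fin.cases ?_ (fun i => ?_) j <;> rfl
  have hli' : LinearIndependent ℝ ((gbdry V d).submatrix id c').col := by
    rw [hcols, linearIndependent_finCons, hspan']
    exact ⟨hli.comp e.symm e.symm.injective, hL⟩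
  obtain ⟨r, hr, hdet⟩ := exists_minor _ hli'
  set B := (gbdryZ V d).submatrix r c' with hB
  have hBdet : (((gbdry V d).submatrix id c').submatrix r id).det = (B.det : ℝ) :=
    (Int.cast_det B).symm
  rw [hBdet] at hdet
  -- A row outside `L` would be zero: the boundaries of `σ` and of the `c i` are supported on `L`.
  have hrL : ∀ i, (r i : Finset V) ∈ L.faces := by
    intro i
    by_contra h
    refine hdet ?_
    rw [Matrix.det_eq_zero_of_row_eq_zero i, Int.cast_zero]
    intro j
    refine if_neg fun hh => h ?_
    have hne : (r i : Finset V).Nonempty := Finset.card_pos.1 (by rw [(r i).2]; omega)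
    revert hh
    refine Fin.cases ?_ (fun j => ?_) j
    · rintro ⟨h1, h2⟩
      refine hσ _ h1 hne fun h3 => ?_
      have h4 : (r i : Finset V).card = (σ : Finset V).card := by rw [h3]
      rw [(r i).2, σ.2] at h4
      omega
    · rintro ⟨h1, -⟩
      exact L.down_closed _ (hcL j) _ h1 hne
  set q : Fin (m + 1) → ℝ := fun j => (B.adjugate 0 j : ℝ) / (B.det : ℝ) with hq
  have hqB : ∀ k, ∑ j, q j * gbdry V d (r j) (c' k) = if 0 = k then 1 else 0 := by
    intro k
    have h1 : ∑ j, B.adjugate 0 j * B j k = if 0 = k then B.det else 0 := by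
      have := congrFun (congrFun (Matrix.adjugate_mul B) 0) k
      rw [Matrix.mul_apply, Matrix.smul_apply, Matrix.one_apply] at this
      simpa using this
    have h2 : ∑ j, q j * gbdry V d (r j) (c' k) =
        ((∑ j, B.adjugate 0 j * B j k : ℤ) : ℝ) / (B.det : ℝ) := by
      rw [Int.cast_sum, Finset.sum_div]
      refine Finset.sum_congr rfl fun j _ => ?_
      rw [Int.cast_mul, mul_div_right_comm]
      rfl
    rw [h2, h1]
    split_ifs
    · exact div_self hdet
    · simp
  have hqT : ∀ j, q j ^ 2 ≤ (T : ℝ) ^ 2 := by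
    intro j
    have h1 : (B.adjugate 0 j).natAbs ≤ T := by
      rw [Matrix.adjugate_fin_succ_eq_det_submatrix, Int.natAbs_mul, Int.natAbs_pow]
      simp only [Int.natAbs_neg, Int.natAbs_one, one_pow, one_mul]
      exact natAbs_minor_le hT (r := r ∘ j.succAbove) (c := c)
        (hr.comp Fin.succAbove_right_injective) hcinj
        (fun i => hLK (hrL _)) (fun i => hLK (hcL i))
    have h2 : |(B.adjugate 0 j : ℝ)| ≤ T := by
      rw [← Int.cast_abs, ← Nat.cast_natAbs]
      exact_mod_cast h1
    have h3 : 1 ≤ |(B.det : ℝ)| := by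
      rw [← Int.cast_abs]
      exact_mod_cast Int.one_le_abs (by exact_mod_cast hdet)
    rw [← sq_abs (q j)]
    have h4 : |q j| ≤ T := by
      rw [hq, abs_div]
      exact (div_le_self (abs_nonneg _) h3).trans h2
    gcongr
  have hsum : ∀ x : SimpIdx V d → ℝ, Function.extend r q 0 ⬝ᵥ x = ∑ j, q j * x (r j) :=
    fun x => sum_extend hr q (fun z τ => z * x τ) fun i => zero_mul _
  refine ⟨Function.extend r q 0, fun τ hτ => ?_, funext fun s => ?_, ?_, ?_⟩
  · by_contra h
    refine hτ (Function.extend_apply' q (0 : SimpIdx V d → ℝ) τ ?_)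
    rintro ⟨i, rfl⟩
    exact h (hrL i)
  · rw [bdry_transpose_mulVec, Pi.zero_apply]
    split_ifs with hs
    · have hmem : (gbdry V d).col s ∈
          Submodule.span ℝ (Set.range fun i => (gbdry V d).col (c i)) := by
        rw [hspan']
        exact Submodule.subset_span ⟨⟨s, hs⟩, rfl⟩
      change (gbdry V d).col s ⬝ᵥ _ = 0
      rw [dotProduct_comm]
      generalize (gbdry V d).col s = y at hmem
      induction hmem using Submodule.span_induction with
      | mem x hx =>
        obtain ⟨i, rfl⟩ := hx
        rw [hsum]
        exact (hqB i.succ).trans (if_neg (Fin.succ_ne_zero i).symm)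
      | zero => exact dotProduct_zero _
      | add x y _ _ hx hy => rw [dotProduct_add, hx, hy, add_zero]
      | smul t x _ hx => rw [dotProduct_smul, hx, smul_zero]
    · rfl
  · rw [hsum]
    exact (hqB 0).trans (if_pos rfl)
  · have h1 : m + 1 ≤ nface K d := card_le_nface hr fun i => hLK (hrL i)
    have h2 : m + 1 ≤ nface K (d + 1) := by
      refine le_trans ?_ (card_subtype_faces K (d + 1))
      rw [← Fintype.card_fin (m + 1), ← finrank_span_eq_card hli']
      refine le_trans (Submodule.finrank_mono ?_) (finrank_range_le_card
        fun s : {s : SimpIdx V (d + 1) // (s : Finset V) ∈ K.faces} => (gbdry V d).col s.1)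
      rw [hcols, Submodule.span_le]
      rintro _ ⟨j, rfl⟩
      refine Fin.cases hK (fun i => ?_) j
      exact Submodule.subset_span ⟨⟨c i, hLK (hcL i)⟩, rfl⟩
    rw [sum_extend hr q (fun z _ => z ^ 2) fun _ => zero_pow two_ne_zero]
    calc ∑ j, q j ^ 2 ≤ ∑ _j : Fin (m + 1), (T : ℝ) ^ 2 := Finset.sum_le_sum fun j _ => hqT j
      _ = ((m + 1 : ℕ) : ℝ) * (T : ℝ) ^ 2 := by simp
      _ ≤ _ := by
        gcongr
        exact le_min h1 h2

/-- **Effective capacitance bounded by relative torsion.** There is a constant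
`C > 0` such that for all `(d+1)`-dimensional simplicial complexes `L ⊆ K` and
every `(d+1)`-simplex `σ ∉ L` all of whose proper faces lie in `L`, if `γ = ∂σ` is
null-homologous in `K` but not in `L`, and every relative homology group
`H_d(L', L₀'; ℤ)` of `K` has torsion subgroup of cardinality at most `T`, then
`C_γ(L, K) ≤ C · n · n₀ · T²` where `n = min{n_d, n_{d+1}}` and `n₀` is the number
of vertices of `K`. -/
theorem effective_capacitance_le_torsion_bound :
    ∃ C : ℝ, 0 < C ∧
      ∀ (V : Type) [Fintype V] [LinearOrder V] (K L : SComplex V) (d : ℕ),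
      L.faces ⊆ K.faces →
      (∀ s ∈ K.faces, s.card ≤ d + 2) →
      ∀ (σ : SimpIdx V (d + 1)), (σ : Finset V) ∉ L.faces →
      (∀ t ⊆ (σ : Finset V), t.Nonempty → t ≠ (σ : Finset V) → t ∈ L.faces) →
      K.NullHomologous d (fun τ => ((bsign (τ : Finset V) (σ : Finset V) : ℤ) : ℝ)) →
      ¬ L.NullHomologous d (fun τ => ((bsign (τ : Finset V) (σ : Finset V) : ℤ) : ℝ)) →
      ∀ T : ℕ, (∀ L' L₀' : SComplex V, L'.faces ⊆ K.faces → L₀'.faces ⊆ L'.faces →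
        relTorsionCard L' L₀' d ≤ T) →
      K.effCap L d (fun τ => ((bsign (τ : Finset V) (σ : Finset V) : ℤ) : ℝ)) ≤
        C * ((min (nface K d) (nface K (d + 1)) : ℕ) : ℝ) * ((nface K 0 : ℕ) : ℝ) *
          (T : ℝ) ^ 2 := by
  refine ⟨1, one_pos, ?_⟩
  intro V _ _ K L d hLK _ σ _ hσ hK hL T hT
  obtain ⟨p, hp1, hp2, hp3, hp4⟩ := exists_bounded_potential hLK hσ hK hL hT
  have hbdd : BddBelow {E : ℝ | ∃ p : SimpIdx V d → ℝ, L.supportedOn p ∧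
      (L.bdry d)ᵀ *ᵥ p = 0 ∧
      p ⬝ᵥ (fun τ => ((bsign (τ : Finset V) (σ : Finset V) : ℤ) : ℝ)) = 1 ∧
      E = ∑ s : SimpIdx V (d + 1), ((K.bdry d)ᵀ *ᵥ p) s ^ 2 * 1} := by
    refine ⟨0, ?_⟩
    rintro _ ⟨p, -, -, -, rfl⟩
    exact Finset.sum_nonneg fun s _ => by positivity
  refine (csInf_le hbdd ⟨p, hp1, hp2, hp3, rfl⟩).trans ?_
  simp only [mul_one]
  calc ∑ s, ((K.bdry d)ᵀ *ᵥ p) s ^ 2 ≤ nface K 0 * ∑ τ, p τ ^ 2 := sum_coboundary_sq_le K p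
    _ ≤ nface K 0 * (((min (nface K d) (nface K (d + 1)) : ℕ) : ℝ) * (T : ℝ) ^ 2) := by
      gcongr
    _ = _ := by ring
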